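/- arXiv:2411.08653 — 4 statements merged into one kernel-verified Lean document; each statement's English description precedes it below -/
import Mathlib

section
/- Let γ_i : X_i × X_i → ℝ (1 ≤ i ≤ n) be CND kernels. Then the Kronecker product kernel (x_{1⃗},x_{2⃗}) ↦ ∏_{i=1}^n γ_i(x_i^1, x_i^2) is a PDI_n kernel on 𝕏_n; that is, ∫∫ (−1)^n ∏_{i=1}^n γ_i(x_i^1,x_i^2) dμ(x_{1⃗}) dμ(x_{2⃗}) ≥ 0 for every discrete measure μ ∈ ℳ_n(𝕏_n). -/
/-!
Write `n` for the number of coordinates. A measure in `ℳ_n` has coefficients `c` whose sum along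
every single coordinate vanishes, so the quadratic form `c ⬝ᵥ (⨂ᵢ Aᵢ) *ᵥ c` of a Kronecker product
does not change when a matrix of the form `(a, b) ↦ f a + g b` is added to one of the factors.
The sign `(-1)ⁿ` turns every factor `γᵢ` into `-γᵢ`, and by Schoenberg's trick the Gram matrix of
`-γᵢ` becomes positive semidefinite after adding such a matrix. By the Schur product theorem the
resulting Kronecker product is positive semidefinite.
-/

noncomputable section

open Finset

namespace PDIPaper

variable {ι : Type*} [Fintype ι] [DecidableEq ι] {X : ι → Type*}

/-- The grid point `x_α` determined by grid data `x` and a multi-index `α`. -/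
def gridPt {m : ℕ} (x : ∀ i, Fin m → X i) (α : ι → Fin m) : ∀ i, X i :=
  fun i => x i (α i)

/-- The point whose coordinates in `F` come from `a` and whose coordinates outside
`F` come from `b` (the point `a_F + b_{F^c}`). -/
def comb (F : Finset ι) (a b : ∀ i, X i) : ∀ i, X i :=
  fun i => if i ∈ F then a i else b i

/-- Glue an `F`-indexed point and an `Fᶜ`-indexed point into a full point. -/
def glue (F : Finset ι) (a : ∀ i : {i // i ∈ F}, X i.1)
    (b : ∀ i : {i // i ∈ Fᶜ}, X i.1) : ∀ i, X i :=
  fun i => if h : i ∈ F then a ⟨i, h⟩ else b ⟨i, Finset.mem_compl.mpr h⟩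

/-- The coefficients `c` of a discrete measure (supported on a grid with `m` points
in each coordinate) belong to `ℳ_k`: for every coordinate subset `F` of cardinality
`n - k + 1` and every fixed multi-index `β` off `F`, the sum of the coefficients over
the `F`-indices vanishes. -/
def MemM (k : ℕ) {m : ℕ} (c : (ι → Fin m) → ℝ) : Prop :=
  ∀ F : Finset ι, F.card = Fintype.card ι - k + 1 →
    ∀ β : ι → Fin m,
      (∑ σ : {i // i ∈ F} → Fin m,
        c fun i => if h : i ∈ F then σ ⟨i, h⟩ else β i) = 0

/-- The double integral `∬ I dμ dμ` of a kernel against a discrete measure with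
grid `x` and coefficients `c`. -/
def dSum {m : ℕ} (I : (∀ i, X i) → (∀ i, X i) → ℝ)
    (x : ∀ i, Fin m → X i) (c : (ι → Fin m) → ℝ) : ℝ :=
  ∑ α : ι → Fin m, ∑ β : ι → Fin m, c α * c β * I (gridPt x α) (gridPt x β)

/-- `sel x1 x2 α` is the point `x_α` for `α ∈ {1,2}^n`, encoded by `Bool`
(`false ↦ 1`, `true ↦ 2`). -/
def sel (x1 x2 : ∀ i, X i) (α : ι → Bool) : ∀ i, X i :=
  fun i => if α i then x2 i else x1 i

/-- `n`-symmetry of a kernel: `I (x_α) (x_{3⃗-α}) = I x1 x2` for all `α ∈ {1,2}^n`. -/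
def NSymm (I : (∀ i, X i) → (∀ i, X i) → ℝ) : Prop :=
  ∀ (x1 x2 : ∀ i, X i) (α : ι → Bool),
    I (sel x1 x2 α) (sel x1 x2 fun i => !(α i)) = I x1 x2

/-- Complete `n`-symmetry of a kernel. -/
def CompleteNSymm (I : (∀ i, X i) → (∀ i, X i) → ℝ) : Prop :=
  NSymm I ∧ ∀ (F : Finset ι) (x1 x2 x3 x4 : ∀ i, X i),
    I (comb F x1 x3) (comb F x2 x3) = I (comb F x1 x4) (comb F x2 x4)

/-- Positive definite independent kernel of order `k`: an `n`-symmetric kernel with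
`∬ (-1)^k I dμ dμ ≥ 0` for every discrete measure `μ ∈ ℳ_k`. -/
def IsPDI (k : ℕ) (I : (∀ i, X i) → (∀ i, X i) → ℝ) : Prop :=
  NSymm I ∧
    ∀ (m : ℕ) (x : ∀ i, Fin m → X i), (∀ i, Function.Injective (x i)) →
      ∀ c : (ι → Fin m) → ℝ, MemM k c →
        0 ≤ (-1 : ℝ) ^ k * dSum I x c

/-- Strictly positive definite independent kernel of order `k`. -/
def IsSPDI (k : ℕ) (I : (∀ i, X i) → (∀ i, X i) → ℝ) : Prop :=
  NSymm I ∧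
    ∀ (m : ℕ) (x : ∀ i, Fin m → X i), (∀ i, Function.Injective (x i)) →
      ∀ c : (ι → Fin m) → ℝ, MemM k c → (∃ α, c α ≠ 0) →
        0 < (-1 : ℝ) ^ k * dSum I x c

/-- The kernel vanishes on the extended diagonal `Δ_{k-1}^n`, i.e. on pairs of points
agreeing in at least `n - k + 1` coordinates. -/
def ZeroAtDiag (k : ℕ) (I : (∀ i, X i) → (∀ i, X i) → ℝ) : Prop :=
  ∀ x1 x2 : ∀ i, X i,
    (∃ s : Finset ι, s.card = Fintype.card ι - k + 1 ∧ ∀ i ∈ s, x1 i = x2 i) →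
    I x1 x2 = 0

/-- Conditionally negative definite (CND) symmetric kernel. -/
def IsCND {Z : Type*} (γ : Z → Z → ℝ) : Prop :=
  (∀ a b, γ a b = γ b a) ∧
    ∀ (m : ℕ) (z : Fin m → Z) (c : Fin m → ℝ), (∑ i, c i) = 0 →
      (∑ i, ∑ j, c i * c j * γ (z i) (z j)) ≤ 0

/-- Positive definite kernel (quadratic-form condition). -/
def IsPD {Z : Type*} (K : Z → Z → ℝ) : Prop :=
  ∀ (m : ℕ) (z : Fin m → Z) (c : Fin m → ℝ),
    0 ≤ ∑ i, ∑ j, c i * c j * K (z i) (z j)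

/-- Integral of `f` against the discrete measure
`μ_k^n[x1, x2] = δ_{x1} + ∑_{j=0}^{k-1} (-1)^{k-j} C(n-j-1, n-k) ∑_{|F|=j} δ_{x1_F + x2_{F^c}}`. -/
def muInt (k : ℕ) (x1 x2 : ∀ i, X i) (f : (∀ i, X i) → ℝ) : ℝ :=
  f x1 + ∑ j ∈ Finset.range k,
    (-1 : ℝ) ^ (k - j) *
      ((Nat.choose (Fintype.card ι - j - 1) (Fintype.card ι - k) : ℕ) : ℝ) *
      ∑ F ∈ Finset.powersetCard j (Finset.univ : Finset ι), f (comb F x1 x2)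

section ZeroMarginal

variable {κ : ι → Type*} [∀ i, Fintype (κ i)] {R : Type*}

/-- The coefficients `c` on a product of finite sets sum to zero along every line parallel to the
`i`-th axis. The lines are parametrized redundantly, through all of their points `β`. -/
def ZeroMarginal [AddCommMonoid R] (i : ι) (c : (∀ i, κ i) → R) : Prop :=
  ∀ β : ∀ i, κ i, ∑ a, c (Function.update β i a) = 0

theorem ZeroMarginal.sum_mul_eq_zero [NonUnitalNonAssocSemiring R] {i : ι} {c h : (∀ i, κ i) → R}
    (hc : ZeroMarginal i c) (hh : ∀ β a, h (Function.update β i a) = h β) :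
    ∑ β, c β * h β = 0 := by
  rw [← (Equiv.piSplitAt i κ).symm.sum_comp, Fintype.sum_prod_type_right]
  refine sum_eq_zero fun g _ => ?_
  obtain _ | ⟨⟨a₀⟩⟩ := isEmpty_or_nonempty (κ i)
  · exact Fintype.sum_empty _
  let β₀ : ∀ i, κ i := (Equiv.piSplitAt i κ).symm (a₀, g)
  have line_eq (a : κ i) : (Equiv.piSplitAt i κ).symm (a, g) = Function.update β₀ i a := by
    ext j
    by_cases hj : j = i
    · subst hj; simp
    · simp [β₀, hj]
  simp only [line_eq, hh]
  rw [← sum_mul, hc, zero_mul]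

theorem memM_card_iff {m : ℕ} {c : (ι → Fin m) → ℝ} :
    MemM (Fintype.card ι) c ↔ ∀ i, ZeroMarginal i c := by
  have sum_glue_singleton (i : ι) (β : ι → Fin m) :
      (∑ σ : {j // j ∈ ({i} : Finset ι)} → Fin m,
        c fun j => if h : j ∈ ({i} : Finset ι) then σ ⟨j, h⟩ else β j) =
      ∑ a, c (Function.update β i a) := by
    rw [← (Equiv.funUnique {j // j ∈ ({i} : Finset ι)} (Fin m)).symm.sum_comp]
    refine sum_congr rfl fun a _ => congrArg c (funext fun j => ?_)
    by_cases hj : j = i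
    · subst hj; simp
    · simp [hj]
  simp only [MemM, Nat.sub_self, zero_add, card_eq_one, forall_exists_index, ZeroMarginal]
  constructor
  · intro hc i β
    rw [← sum_glue_singleton, hc {i} i rfl β]
  · rintro hc _ i rfl β
    rw [sum_glue_singleton, hc]

end ZeroMarginal

section PiKronecker

open scoped Matrix
open Matrix (vecMulVec)

variable {κ κ' : ι → Type*} {R : Type*}

/-- The Kronecker product of a finite family of matrices, with rows and columns indexed by
multi-indices. -/
def piKronecker [CommMonoid R] (A : ∀ i, Matrix (κ i) (κ' i) R) :
    Matrix (∀ i, κ i) (∀ i, κ' i) R :=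
  Matrix.of fun α β => ∏ i, A i (α i) (β i)

omit [DecidableEq ι] in
theorem transpose_piKronecker [CommMonoid R] (A : ∀ i, Matrix (κ i) (κ' i) R) :
    (piKronecker A)ᵀ = piKronecker fun i => (A i)ᵀ :=
  rfl

omit [DecidableEq ι] in
theorem piKronecker_neg [CommRing R] (A : ∀ i, Matrix (κ i) (κ' i) R) :
    piKronecker (-A) = (-1 : R) ^ Fintype.card ι • piKronecker A := by
  ext α β
  simp [piKronecker, prod_neg]

open scoped ComplexOrder in
omit [DecidableEq ι] in
theorem posSemidef_piKronecker {𝕜 : Type*} [RCLike 𝕜] {A : ∀ i, Matrix (κ i) (κ i) 𝕜}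
    (hA : ∀ i, (A i).PosSemidef) : (piKronecker A).PosSemidef := by
  classical
  suffices h : ∀ s : Finset ι,
      (Matrix.of fun α β : ∀ i, κ i => ∏ i ∈ s, A i (α i) (β i)).PosSemidef from h univ
  intro s
  induction s using Finset.induction_on with
  | empty =>
    convert (Matrix.PosSemidef.one (n := Unit) (R := 𝕜)).submatrix fun _ : ∀ i, κ i => ()
    simp only [prod_empty]
    rfl
  | insert i s hi ih =>
    convert ((hA i).submatrix fun α : ∀ i, κ i => α i).hadamard ih
    simp only [prod_insert hi]
    rfl

theorem piKronecker_update_apply [CommMonoid R] (A : ∀ i, Matrix (κ i) (κ' i) R) (i : ι)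
    (B : Matrix (κ i) (κ' i) R) (α : ∀ i, κ i) (β : ∀ i, κ' i) :
    piKronecker (Function.update A i B) α β =
      B (α i) (β i) * ∏ j ∈ univ.erase i, A j (α j) (β j) := by
  rw [piKronecker, Matrix.of_apply, ← mul_prod_erase _ _ (mem_univ i), Function.update_self]
  congr 1
  refine prod_congr rfl fun j hj => ?_
  rw [Function.update_of_ne (ne_of_mem_erase hj)]

theorem piKronecker_update_add [CommSemiring R] (A : ∀ i, Matrix (κ i) (κ' i) R) (i : ι)
    (B C : Matrix (κ i) (κ' i) R) :
    piKronecker (Function.update A i (B + C)) =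
      piKronecker (Function.update A i B) + piKronecker (Function.update A i C) := by
  ext α β
  simp only [piKronecker_update_apply, Matrix.add_apply, add_mul]

theorem piKronecker_update_vecMulVec_one_mulVec [CommSemiring R] [∀ i, Fintype (κ' i)]
    (A : ∀ i, Matrix (κ i) (κ' i) R) {i : ι} (f : κ i → R) {d : (∀ i, κ' i) → R}
    (hd : ZeroMarginal i d) :
    piKronecker (Function.update A i (vecMulVec f 1)) *ᵥ d = 0 := by
  ext α
  rw [Matrix.mulVec, dotProduct_comm]
  refine hd.sum_mul_eq_zero fun β b => ?_
  simp only [piKronecker_update_apply, Matrix.vecMulVec_apply, Pi.one_apply]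
  congr 1
  refine prod_congr rfl fun j hj => ?_
  rw [Function.update_of_ne (ne_of_mem_erase hj)]

theorem vecMul_piKronecker_update_vecMulVec_one [CommSemiring R] [∀ i, Fintype (κ i)]
    (A : ∀ i, Matrix (κ i) (κ' i) R) {i : ι} (g : κ' i → R) {c : (∀ i, κ i) → R}
    (hc : ZeroMarginal i c) :
    c ᵥ* piKronecker (Function.update A i (vecMulVec 1 g)) = 0 := by
  have transpose_update : (fun j => (Function.update A i (vecMulVec 1 g) j)ᵀ) =
      Function.update (fun j => (A j)ᵀ) i (vecMulVec g 1) := by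
    rw [← Matrix.transpose_vecMulVec]
    exact funext (Function.apply_update (fun _ M => Mᵀ) A i _)
  rw [← Matrix.mulVec_transpose, transpose_piKronecker, transpose_update,
    piKronecker_update_vecMulVec_one_mulVec _ _ hc]

variable [CommSemiring R] [∀ i, Fintype (κ i)] [∀ i, Fintype (κ' i)]

theorem dotProduct_piKronecker_update_add_mulVec (A : ∀ i, Matrix (κ i) (κ' i) R) {i : ι}
    (B : Matrix (κ i) (κ' i) R) (f : κ i → R) (g : κ' i → R)
    {c : (∀ i, κ i) → R} (hc : ZeroMarginal i c) {d : (∀ i, κ' i) → R} (hd : ZeroMarginal i d) :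
    c ⬝ᵥ piKronecker (Function.update A i (B + vecMulVec f 1 + vecMulVec 1 g)) *ᵥ d =
      c ⬝ᵥ piKronecker (Function.update A i B) *ᵥ d := by
  simp only [piKronecker_update_add, Matrix.add_mulVec, dotProduct_add,
    piKronecker_update_vecMulVec_one_mulVec A f hd, add_zero]
  rw [Matrix.dotProduct_mulVec c (piKronecker (Function.update A i (vecMulVec 1 g))),
    vecMul_piKronecker_update_vecMulVec_one A g hc, zero_dotProduct, add_zero]

theorem dotProduct_piKronecker_add_mulVec (A : ∀ i, Matrix (κ i) (κ' i) R) (f : ∀ i, κ i → R)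
    (g : ∀ i, κ' i → R) {c : (∀ i, κ i) → R} (hc : ∀ i, ZeroMarginal i c)
    {d : (∀ i, κ' i) → R} (hd : ∀ i, ZeroMarginal i d) :
    c ⬝ᵥ piKronecker (fun i => A i + vecMulVec (f i) 1 + vecMulVec 1 (g i)) *ᵥ d =
      c ⬝ᵥ piKronecker A *ᵥ d := by
  let A' := fun i => A i + vecMulVec (f i) 1 + vecMulVec 1 (g i)
  suffices h : ∀ s : Finset ι,
      c ⬝ᵥ piKronecker (s.piecewise A' A) *ᵥ d = c ⬝ᵥ piKronecker A *ᵥ d by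
    simpa only [piecewise_univ] using h univ
  intro s
  induction s using Finset.induction_on with
  | empty => rw [piecewise_empty]
  | insert i s hi ih =>
    rw [piecewise_insert, dotProduct_piKronecker_update_add_mulVec _ _ _ _ (hc i) (hd i),
      ← piecewise_eq_of_notMem s A' A hi, Function.update_eq_self, ih]

end PiKronecker

section KernelMatrix

open scoped Matrix
open Matrix (vecMulVec)

/-- The Gram matrix of a kernel at the points `x a`. -/
def kernelMatrix {Z κ R : Type*} (K : Z → Z → R) (x : κ → Z) : Matrix κ κ R :=
  Matrix.of fun a b => K (x a) (x b)

theorem IsCND.dotProduct_kernelMatrix_mulVec_le {Z : Type*} {γ : Z → Z → ℝ} (hγ : IsCND γ) (z : Z)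
    {m : ℕ} (x : Fin m → Z) (c : Fin m → ℝ) :
    c ⬝ᵥ kernelMatrix γ x *ᵥ c ≤
      2 * (∑ a, c a) * (∑ a, c a * γ (x a) z) - (∑ a, c a) ^ 2 * γ z z := by
  -- Adding the atom `-(∑ a, c a)` at `z` makes the total mass zero.
  have extended_nonpos := hγ.2 (m + 1) (Fin.cons z x) (Fin.cons (-∑ a, c a) c)
    (by simp [Fin.sum_univ_succ])
  have quadForm_eq : c ⬝ᵥ kernelMatrix γ x *ᵥ c =
      ∑ a, ∑ b, c a * c b * γ (x a) (x b) := by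
    simp only [dotProduct, Matrix.mulVec, kernelMatrix, Matrix.of_apply, mul_sum]
    exact sum_congr rfl fun a _ => sum_congr rfl fun b _ => by ring
  have row_eq : ∑ b, (-∑ a, c a) * c b * γ z (x b) =
      -(∑ a, c a) * ∑ a, c a * γ (x a) z := by
    rw [mul_sum]
    exact sum_congr rfl fun b _ => by rw [hγ.1 z]; ring
  have column_eq : ∑ b, c b * (-∑ a, c a) * γ (x b) z =
      -(∑ a, c a) * ∑ a, c a * γ (x a) z := by
    rw [mul_sum]
    exact sum_congr rfl fun b _ => by ring
  simp only [Fin.sum_univ_succ, Fin.cons_zero, Fin.cons_succ, sum_add_distrib, row_eq,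
    column_eq] at extended_nonpos
  rw [quadForm_eq]
  linarith

-- The entries are Schoenberg's `γ a z + γ z b - γ a b - γ z z`, with the constant `γ z z` shared
-- evenly between the row term and the column term.
theorem IsCND.posSemidef_neg_kernelMatrix_add {Z : Type*} {γ : Z → Z → ℝ} (hγ : IsCND γ) (z : Z)
    {m : ℕ} (x : Fin m → Z) :
    (-kernelMatrix γ x + vecMulVec (fun a => γ (x a) z - γ z z / 2) 1 +
      vecMulVec 1 (fun a => γ (x a) z - γ z z / 2)).PosSemidef := by
  refine .of_dotProduct_mulVec_nonneg ?_ fun c => ?_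
  · ext a b
    simp only [kernelMatrix, Matrix.conjTranspose_apply, Matrix.add_apply, Matrix.neg_apply,
      Matrix.of_apply, Matrix.vecMulVec_apply, Pi.one_apply, star_trivial, hγ.1 (x b) (x a)]
    ring
  · have bound := hγ.dotProduct_kernelMatrix_mulVec_le z x c
    have weight_eq : c ⬝ᵥ (fun a => γ (x a) z - γ z z / 2) =
        ∑ a, c a * γ (x a) z - (∑ a, c a) * (γ z z / 2) := by
      simp only [dotProduct, mul_sub, sum_sub_distrib, sum_mul]
    simp only [star_trivial, Matrix.add_mulVec, Matrix.neg_mulVec, Matrix.vecMulVec_mulVec,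
      dotProduct_add, dotProduct_neg, op_smul_eq_smul, dotProduct_smul, smul_eq_mul,
      dotProduct_one, dotProduct_comm _ c, weight_eq]
    linarith

theorem IsCND.exists_posSemidef_neg_kernelMatrix_add {Z : Type*} {γ : Z → Z → ℝ} (hγ : IsCND γ)
    {m : ℕ} (x : Fin m → Z) :
    ∃ f : Fin m → ℝ, (-kernelMatrix γ x + vecMulVec f 1 + vecMulVec 1 f).PosSemidef := by
  cases m with
  | zero => exact ⟨0, by rw [Subsingleton.elim (_ + _) 0]; exact .zero⟩
  | succ m => exact ⟨_, hγ.posSemidef_neg_kernelMatrix_add (x 0) x⟩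

theorem dSum_prod_eq_dotProduct {m : ℕ} (K : ∀ i, X i → X i → ℝ) (x : ∀ i, Fin m → X i)
    (c : (ι → Fin m) → ℝ) :
    dSum (fun x1 x2 => ∏ i, K i (x1 i) (x2 i)) x c =
      c ⬝ᵥ piKronecker (fun i => kernelMatrix (K i) (x i)) *ᵥ c := by
  simp only [dSum, dotProduct, Matrix.mulVec, piKronecker, kernelMatrix, gridPt, Matrix.of_apply,
    mul_sum]
  exact sum_congr rfl fun α _ => sum_congr rfl fun β _ => by ring

omit [DecidableEq ι] in
theorem nSymm_prod {K : ∀ i, X i → X i → ℝ} (hK : ∀ i a b, K i a b = K i b a) :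
    NSymm fun x1 x2 : ∀ i, X i => ∏ i, K i (x1 i) (x2 i) := by
  intro x1 x2 α
  refine prod_congr rfl fun i _ => ?_
  cases h : α i <;> simp [sel, h, hK i (x2 i) (x1 i)]

theorem statement0_general {γ : ∀ i, X i → X i → ℝ} (hγ : ∀ i, IsCND (γ i)) :
    IsPDI (Fintype.card ι) fun x1 x2 : ∀ i, X i => ∏ i, γ i (x1 i) (x2 i) := by
  refine ⟨nSymm_prod fun i => (hγ i).1, fun m x _ c hc => ?_⟩
  have marginals := memM_card_iff.1 hc
  let G : ι → Matrix (Fin m) (Fin m) ℝ := fun i => kernelMatrix (γ i) (x i)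
  choose f hf using fun i => (hγ i).exists_posSemidef_neg_kernelMatrix_add (x i)
  calc 0 ≤ c ⬝ᵥ piKronecker (fun i => -G i + vecMulVec (f i) 1 + vecMulVec 1 (f i)) *ᵥ c :=
        (posSemidef_piKronecker hf).dotProduct_mulVec_nonneg c
    _ = c ⬝ᵥ piKronecker (-G) *ᵥ c :=
        dotProduct_piKronecker_add_mulVec (-G) f f marginals marginals
    _ = (-1) ^ Fintype.card ι *
          dSum (fun x1 x2 : ∀ i, X i => ∏ i, γ i (x1 i) (x2 i)) x c := by
        rw [piKronecker_neg, Matrix.smul_mulVec, dotProduct_smul, smul_eq_mul,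
          dSum_prod_eq_dotProduct]

end KernelMatrix

/-- The Kronecker product of `n` CND kernels is a PDI_n kernel. -/
theorem statement0 {n : ℕ} (X : Fin n → Type*)
    (γ : ∀ i, X i → X i → ℝ) (hγ : ∀ i, IsCND (γ i)) :
    IsPDI n (fun x1 x2 : ∀ i, X i => ∏ i, γ i (x1 i) (x2 i)) := by
  simpa only [Fintype.card_fin] using statement0_general hγ

end PDIPaper
end
end

section
/- Let 𝕴 : 𝕏_n × 𝕏_n → ℝ be an n-symmetric kernel and define 𝕴'(x_{1⃗},x_{2⃗}) := 2^{−n} ∑_{α,β∈{1,2}^n} (−1)^{n−|α|−|β|} 𝕴(x_α, x_β), where |α| = α_1+…+α_n. Then: (a) 𝕴' is n-symmetric; (b) for every discrete measure μ ∈ ℳ_n(𝕏_n), ∫∫ (−1)^n 𝕴' dμ dμ = ∫∫ (−1)^n 𝕴 dμ dμ, hence 𝕴' is PDI_n if and only if 𝕴 is PDI_n; (c) 𝕴'(x_{1⃗},x_{2⃗}) = 0 whenever x_i^1 = x_i^2 for at least one index i; (d) if 𝕴(x_{1⃗},x_{2⃗}) = 0 whenever x_i^1 = x_i^2 for at least one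 index i, then 𝕴' = 𝕴. -/
noncomputable section

open Finset

namespace PDIPaper

variable {ι : Type*} [Fintype ι] [DecidableEq ι] {X : ι → Type*}

/-- The kernel `𝕴'` of Lemma `PDInsimpli`:
`𝕴'(x1,x2) = 2^{-n} ∑_{α,β ∈ {1,2}^n} (-1)^{n-|α|-|β|} 𝕴(x_α, x_β)`. -/
def stmt1Kernel {n : ℕ} {X : Fin n → Type*}
    (I : (∀ i, X i) → (∀ i, X i) → ℝ) : (∀ i, X i) → (∀ i, X i) → ℝ :=
  fun x1 x2 =>
    ((2 : ℝ) ^ n)⁻¹ *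
      ∑ α : Fin n → Bool, ∑ β : Fin n → Bool,
        (-1 : ℝ) ^ ((n : ℤ) - ((∑ i, if α i then 2 else 1 : ℕ) : ℤ)
            - ((∑ i, if β i then 2 else 1 : ℕ) : ℤ)) *
          I (sel x1 x2 α) (sel x1 x2 β)

/-!
Since `n - |α| - |β|` has the parity of the number of indices at which `α` and `β` agree,
`𝕴'(x₁, x₂)` is the mean over `α` of `∑_β (-1) ^ #{i | α i = β i} 𝕴(x_α, x_β)`. If all terms in
which `α` and `β` agree somewhere vanish, only `β = 3⃗ - α` survives, and there `n`-symmetry turns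
the term into `𝕴(x₁, x₂)`. The terms vanish pointwise if `𝕴` is zero on the diagonals. They vanish
after integration against `μ ∈ ℳ_n` because, when `α i = β i`, the pair `(x_α, x_β)` involves only
one of the two `i`-th integration variables and `μ` has zero `i`-th marginals. If `x₁ i = x₂ i`,
switching `α i` fixes `x_α` and reverses the sign, so the sum cancels in pairs.
-/

section SignedMean

variable {K : Type*} [Field K]

/-- The sign `(-1) ^ #{i | α i = β i}`, which is the sign `(-1) ^ (n - |α| - |β|)` of the paper;
it is encoded as a product over the coordinates so that it can be computed one index at a time. -/
def agreementSign (K : Type*) [Field K] (α β : ι → Bool) : K :=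
  ∏ i, if α i = β i then -1 else 1

/-- The functional `T ↦ 2^{-n} ∑_{α,β} (-1) ^ #{i | α i = β i} T α β`, whose value at
`T α β = 𝕴(x_α, x_β)` is `𝕴'(x_1, x_2)`. It is a linear map so that it commutes with integration. -/
def signedMean : ((ι → Bool) → (ι → Bool) → K) →ₗ[K] K :=
  ((2 : K) ^ Fintype.card ι)⁻¹ •
    ∑ α, ∑ β, agreementSign K α β • (LinearMap.proj β ∘ₗ LinearMap.proj α)

omit [DecidableEq ι] in
theorem agreementSign_not_right (α : ι → Bool) : agreementSign K α (fun i => !(α i)) = 1 := by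
  simp [agreementSign]

omit [DecidableEq ι] in
theorem agreementSign_xor_xor (γ α β : ι → Bool) :
    agreementSign K (fun i => γ i ^^ α i) (fun i => γ i ^^ β i) = agreementSign K α β := by
  simp [agreementSign]

theorem agreementSign_update_not_left (α β : ι → Bool) (i : ι) :
    agreementSign K (Function.update α i !(α i)) β = -agreementSign K α β := by
  have sign_at : (if (!(α i)) = β i then (-1 : K) else 1) = -if α i = β i then -1 else 1 := by
    cases α i <;> cases β i <;> simp
  have sign_off : ∀ j ∈ ({i}ᶜ : Finset ι),
      (if Function.update α i (!(α i)) j = β j then (-1 : K) else 1) =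
        if α j = β j then -1 else 1 := fun j hj => by
    rw [Function.update_of_ne (by simpa using hj)]
  simp only [agreementSign, Fintype.prod_eq_mul_prod_compl i, Function.update_self, sign_at,
    prod_congr rfl sign_off, neg_mul]

theorem signedMean_apply (T : (ι → Bool) → (ι → Bool) → K) :
    signedMean T = ((2 : K) ^ Fintype.card ι)⁻¹ * ∑ α, ∑ β, agreementSign K α β * T α β := by
  simp [signedMean]

theorem signedMean_xor_xor (γ : ι → Bool) (T : (ι → Bool) → (ι → Bool) → K) :
    signedMean (fun α β => T (fun i => γ i ^^ α i) (fun i => γ i ^^ β i)) = signedMean T := by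
  have xor_involutive : Function.Involutive fun (α : ι → Bool) i => γ i ^^ α i := fun α => by simp
  simp only [signedMean_apply]
  congr 1
  refine Fintype.sum_equiv xor_involutive.toPerm _ _ fun α => ?_
  refine Fintype.sum_equiv xor_involutive.toPerm _ _ fun β => ?_
  simp only [Function.Involutive.coe_toPerm, agreementSign_xor_xor]

theorem signedMean_eq_zero_of_update_not {T : (ι → Bool) → (ι → Bool) → K} (i : ι)
    (hT : ∀ α, T (Function.update α i !(α i)) = T α) : signedMean T = 0 := by
  suffices ∑ α, ∑ β, agreementSign K α β * T α β = 0 by rw [signedMean_apply, this, mul_zero]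
  refine sum_involution (fun α _ => Function.update α i !(α i)) (fun α _ => ?_) (fun α _ _ h => ?_)
    (fun _ _ => mem_univ _) (fun α _ => by simp)
  · simp [agreementSign_update_not_left, hT]
  · simpa using congrFun h i

theorem signedMean_eq_of_eq_zero_of_agree [NeZero (2 : K)] {T : (ι → Bool) → (ι → Bool) → K}
    {D : K} (h_agree : ∀ α β i, α i = β i → T α β = 0) (h_not : ∀ α, T α (fun i => !(α i)) = D) :
    signedMean T = D := by
  have inner_sum (α : ι → Bool) : ∑ β, agreementSign K α β * T α β = D := by
    rw [Fintype.sum_eq_single fun i => !(α i), agreementSign_not_right, h_not, one_mul]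
    intro β hβ
    obtain ⟨i, hi⟩ := Function.ne_iff.mp hβ
    rw [h_agree α β i (by simpa using hi.symm), mul_zero]
  simp [signedMean_apply, inner_sum, NeZero.ne (2 : K)]

end SignedMean

omit [Fintype ι] in
theorem sel_update_not {x₁ x₂ : ∀ i, X i} {i : ι} (h : x₁ i = x₂ i) (α : ι → Bool) :
    sel x₁ x₂ (Function.update α i !(α i)) = sel x₁ x₂ α := by
  funext j
  obtain rfl | hj := eq_or_ne j i
  · simp [sel, h]
  · simp [sel, hj]

section Sel

omit [Fintype ι] [DecidableEq ι]

theorem sel_sel_not (x₁ x₂ : ∀ i, X i) (γ α : ι → Bool) :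
    sel (sel x₁ x₂ γ) (sel x₁ x₂ fun i => !(γ i)) α = sel x₁ x₂ fun i => γ i ^^ α i := by
  funext i
  cases hγ : γ i <;> cases hα : α i <;> simp [sel, hγ, hα]

theorem dependsOn_sel_left {α : ι → Bool} {i : ι} (hα : α i = true) (x₂ : ∀ i, X i) :
    DependsOn (fun x₁ => sel x₁ x₂ α) ({i}ᶜ : Set ι) := fun x₁ x₁' h => by
  funext j
  obtain rfl | hj := eq_or_ne j i
  · simp [sel, hα]
  · simp [sel, h j hj]

theorem dependsOn_sel_right {α : ι → Bool} {i : ι} (hα : α i = false) (x₁ : ∀ i, X i) :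
    DependsOn (fun x₂ => sel x₁ x₂ α) ({i}ᶜ : Set ι) := fun x₂ x₂' h => by
  funext j
  obtain rfl | hj := eq_or_ne j i
  · simp [sel, hα]
  · simp [sel, h j hj]

theorem dependsOn_comp_gridPt {m : ℕ} {β : Type*} {f : (∀ i, X i) → β} {s : Set ι}
    (hf : DependsOn f s) (x : ∀ i, Fin m → X i) : DependsOn (fun a => f (gridPt x a)) s :=
  fun _ _ h => hf fun j hj => congrArg (x j) (h j hj)

end Sel

theorem MemM.sum_mul_eq_zero {k m : ℕ} {c : (ι → Fin m) → ℝ} (hc : MemM k c) {F : Finset ι}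
    (hF : F.card = Fintype.card ι - k + 1) {g : (ι → Fin m) → ℝ}
    (hg : DependsOn g (Fᶜ : Set ι)) : ∑ b, c b * g b = 0 := by
  let e := Equiv.piEquivPiSubtypeProd (· ∈ F) fun _ : ι => Fin m
  rw [← e.symm.sum_comp, Fintype.sum_prod_type_right]
  refine sum_eq_zero fun τ _ => ?_
  obtain _ | ⟨⟨σ₀⟩⟩ := isEmpty_or_nonempty ({i // i ∈ F} → Fin m)
  · simp
  have g_const (σ) : g (e.symm (σ, τ)) = g (e.symm (σ₀, τ)) := hg fun j hj => by
    have hj : j ∉ F := hj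
    simp [e, Equiv.piEquivPiSubtypeProd, hj]
  have marginal : ∑ σ, c (e.symm (σ, τ)) = 0 := by
    rw [← hc F hF (e.symm (σ₀, τ))]
    refine sum_congr rfl fun σ _ => congrArg c (funext fun j => ?_)
    by_cases hj : j ∈ F <;> simp [e, Equiv.piEquivPiSubtypeProd, hj]
  simp only [g_const, ← sum_mul, marginal, zero_mul]

/-- The kernel `(x_1, x_2) ↦ 𝕴(x_α, x_β)`, a single term of `𝕴'` without its sign. -/
def selKernel (I : (∀ i, X i) → (∀ i, X i) → ℝ) (α β : ι → Bool) :
    (∀ i, X i) → (∀ i, X i) → ℝ :=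
  fun x₁ x₂ => I (sel x₁ x₂ α) (sel x₁ x₂ β)

/-- The kernel `𝕴'` over an arbitrary finite index set: the signed mean of the kernels
`(x_1, x_2) ↦ 𝕴(x_α, x_β)`. -/
def alternatedKernel (I : (∀ i, X i) → (∀ i, X i) → ℝ) : (∀ i, X i) → (∀ i, X i) → ℝ :=
  fun x₁ x₂ => signedMean fun α β => selKernel I α β x₁ x₂

theorem dSum_selKernel_eq_zero (I : (∀ i, X i) → (∀ i, X i) → ℝ) {m : ℕ} (x : ∀ i, Fin m → X i)
    {c : (ι → Fin m) → ℝ} (hc : MemM (Fintype.card ι) c) {α β : ι → Bool} {i : ι}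
    (h : α i = β i) : dSum (selKernel I α β) x c = 0 := by
  have sum_eq_zero_of_dependsOn {g : (ι → Fin m) → ℝ} (hg : DependsOn g ({i}ᶜ : Set ι)) :
      ∑ b, c b * g b = 0 := hc.sum_mul_eq_zero (F := {i}) (by simp) (by simpa using hg)
  cases hα : α i with
  | false =>
    refine sum_eq_zero fun a _ => ?_
    have depends : DependsOn (fun x₂ => selKernel I α β (gridPt x a) x₂) ({i}ᶜ : Set ι) :=
      fun _ _ hx => congrArg₂ I (dependsOn_sel_right hα _ hx)
        (dependsOn_sel_right (h ▸ hα) _ hx)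
    simp only [mul_assoc, ← mul_sum, sum_eq_zero_of_dependsOn (dependsOn_comp_gridPt depends x),
      mul_zero]
  | true =>
    rw [dSum, sum_comm]
    refine sum_eq_zero fun b _ => ?_
    have depends : DependsOn (fun x₁ => selKernel I α β x₁ (gridPt x b)) ({i}ᶜ : Set ι) :=
      fun _ _ hx => congrArg₂ I (dependsOn_sel_left hα _ hx)
        (dependsOn_sel_left (h ▸ hα) _ hx)
    simp only [mul_comm (c _) (c b), mul_assoc, ← mul_sum,
      sum_eq_zero_of_dependsOn (dependsOn_comp_gridPt depends x), mul_zero]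

theorem dSum_alternatedKernel (I : (∀ i, X i) → (∀ i, X i) → ℝ) {m : ℕ} (x : ∀ i, Fin m → X i)
    (c : (ι → Fin m) → ℝ) :
    dSum (alternatedKernel I) x c = signedMean fun α β => dSum (selKernel I α β) x c := by
  have dSum_eq_sum_smul : (fun α β => dSum (selKernel I α β) x c) = ∑ a, ∑ b,
      (c a * c b) • fun α β => selKernel I α β (gridPt x a) (gridPt x b) := by
    ext α β
    simp [dSum]
  rw [dSum_eq_sum_smul]
  simp only [map_sum, map_smul, smul_eq_mul, dSum, alternatedKernel]

theorem nSymm_alternatedKernel (I : (∀ i, X i) → (∀ i, X i) → ℝ) :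
    NSymm (alternatedKernel I) := fun x₁ x₂ γ => by
  simp only [alternatedKernel, selKernel, sel_sel_not]
  exact signedMean_xor_xor γ fun α β => I (sel x₁ x₂ α) (sel x₁ x₂ β)

theorem dSum_alternatedKernel_of_memM {I : (∀ i, X i) → (∀ i, X i) → ℝ} (hI : NSymm I) {m : ℕ}
    (x : ∀ i, Fin m → X i) {c : (ι → Fin m) → ℝ} (hc : MemM (Fintype.card ι) c) :
    dSum (alternatedKernel I) x c = dSum I x c := by
  rw [dSum_alternatedKernel]
  refine signedMean_eq_of_eq_zero_of_agree (fun _ _ _ => dSum_selKernel_eq_zero I x hc) fun α => ?_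
  simp only [dSum, selKernel, hI _ _ α]

theorem alternatedKernel_eq_zero (I : (∀ i, X i) → (∀ i, X i) → ℝ) {x₁ x₂ : ∀ i, X i} {i : ι}
    (h : x₁ i = x₂ i) : alternatedKernel I x₁ x₂ = 0 :=
  signedMean_eq_zero_of_update_not i fun α => by simp only [selKernel, sel_update_not h]

theorem alternatedKernel_eq_self {I : (∀ i, X i) → (∀ i, X i) → ℝ} (hI : NSymm I)
    (h_diag : ∀ x₁ x₂ : ∀ i, X i, (∃ i, x₁ i = x₂ i) → I x₁ x₂ = 0) : alternatedKernel I = I := by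
  funext x₁ x₂
  exact signedMean_eq_of_eq_zero_of_agree
    (fun α β i h => h_diag _ _ ⟨i, by simp only [sel, h]⟩) (hI x₁ x₂)

theorem isPDI_congr {k : ℕ} {I J : (∀ i, X i) → (∀ i, X i) → ℝ} (hI : NSymm I) (hJ : NSymm J)
    (h : ∀ (m : ℕ) (x : ∀ i, Fin m → X i), (∀ i, Function.Injective (x i)) →
      ∀ c : (ι → Fin m) → ℝ, MemM k c → dSum I x c = dSum J x c) : IsPDI k I ↔ IsPDI k J := by
  refine and_congr (iff_of_true hI hJ) ?_
  refine forall₄_congr fun m x hx c => forall_congr' fun hc => ?_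
  rw [h m x hx c hc]

theorem stmt1Kernel_sign_eq_agreementSign {n : ℕ} (α β : Fin n → Bool) :
    (-1 : ℝ) ^ ((n : ℤ) - ((∑ i, if α i then 2 else 1 : ℕ) : ℤ)
        - ((∑ i, if β i then 2 else 1 : ℕ) : ℤ)) = agreementSign ℝ α β := by
  have neg_one_ne_zero : (-1 : ℝ) ≠ 0 := by norm_num
  rw [zpow_sub₀ neg_one_ne_zero, zpow_sub₀ neg_one_ne_zero, zpow_natCast, zpow_natCast,
    zpow_natCast, ← prod_pow_eq_pow_sum, ← prod_pow_eq_pow_sum, ← Fin.prod_const n (-1 : ℝ),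
    ← prod_div_distrib, ← prod_div_distrib]
  refine prod_congr rfl fun i _ => ?_
  cases α i <;> cases β i <;> norm_num

theorem stmt1Kernel_eq_alternatedKernel {n : ℕ} {X : Fin n → Type*}
    (I : (∀ i, X i) → (∀ i, X i) → ℝ) : stmt1Kernel I = alternatedKernel I := by
  funext x₁ x₂
  simp only [stmt1Kernel, stmt1Kernel_sign_eq_agreementSign, alternatedKernel, selKernel,
    signedMean_apply, Fintype.card_fin]

theorem statement1_general (I : (∀ i, X i) → (∀ i, X i) → ℝ) (hI : NSymm I) :
    NSymm (alternatedKernel I) ∧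
      (∀ (m : ℕ) (x : ∀ i, Fin m → X i) (c : (ι → Fin m) → ℝ), MemM (Fintype.card ι) c →
        dSum (alternatedKernel I) x c = dSum I x c) ∧
      (IsPDI (Fintype.card ι) (alternatedKernel I) ↔ IsPDI (Fintype.card ι) I) ∧
      (∀ x₁ x₂ : ∀ i, X i, (∃ i, x₁ i = x₂ i) → alternatedKernel I x₁ x₂ = 0) ∧
      ((∀ x₁ x₂ : ∀ i, X i, (∃ i, x₁ i = x₂ i) → I x₁ x₂ = 0) → alternatedKernel I = I) := by
  have dSum_eq (m : ℕ) (x : ∀ i, Fin m → X i) (c) (hc : MemM (Fintype.card ι) c) :=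
    dSum_alternatedKernel_of_memM hI x hc
  exact ⟨nSymm_alternatedKernel I, dSum_eq,
    isPDI_congr (nSymm_alternatedKernel I) hI fun m x _ => dSum_eq m x,
    fun _ _ ⟨_, h⟩ => alternatedKernel_eq_zero I h, alternatedKernel_eq_self hI⟩

theorem statement1 {n : ℕ} (X : Fin n → Type*)
    (I : (∀ i, X i) → (∀ i, X i) → ℝ) (hsym : NSymm I) :
    NSymm (stmt1Kernel I) ∧
      (∀ (m : ℕ) (x : ∀ i, Fin m → X i), (∀ i, Function.Injective (x i)) →
        ∀ c : (Fin n → Fin m) → ℝ, MemM n c →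
          (-1 : ℝ) ^ n * dSum (stmt1Kernel I) x c = (-1 : ℝ) ^ n * dSum I x c) ∧
      (IsPDI n (stmt1Kernel I) ↔ IsPDI n I) ∧
      (∀ x1 x2 : ∀ i, X i, (∃ i, x1 i = x2 i) → stmt1Kernel I x1 x2 = 0) ∧
      ((∀ x1 x2 : ∀ i, X i, (∃ i, x1 i = x2 i) → I x1 x2 = 0) → stmt1Kernel I = I) := by
  obtain ⟨h_symm, h_dSum, h_rest⟩ := stmt1Kernel_eq_alternatedKernel I ▸ statement1_general I hsym
  rw [Fintype.card_fin] at h_dSum h_rest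
  exact ⟨h_symm, fun m x _ c hc => by rw [h_dSum m x c hc], h_rest⟩

end PDIPaper
end
end

section
/- Let 𝕴 : 𝕏_n × 𝕏_n → ℝ be an n-symmetric kernel that is zero at the extended diagonal Δ_{n−1}^n, fix x_{0⃗} ∈ 𝕏_n, and let K^𝕴(x_{1⃗},x_{2⃗}) := (−1)^n ∑_{F,G ⊆ {1,…,n}} (−1)^{|F|+|G|} 𝕴(x_{1⃗_F+0⃗_{F^c}}, x_{2⃗_G+0⃗_{G^c}}). Then for all x_{1⃗}, x_{2⃗} ∈ 𝕏_n: ∑_{α,β ∈ {1,2}^n} (−1)^{|α|+|β|} K^𝕴(x_α, x_β) = 2^n 𝕴(x_{1⃗}, x_{2⃗}), where |α| = α_1+…+α_n. -/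
noncomputable section

open Finset

namespace PDIPaper

variable {ι : Type*} [Fintype ι] [DecidableEq ι] {X : ι → Type*}

/-- The kernel `K^𝕴` of Lemma `PDIntoPDn`. -/
def stmt4K {n : ℕ} {X : Fin n → Type*} (I : (∀ i, X i) → (∀ i, X i) → ℝ)
    (x0 : ∀ i, X i) : (∀ i, X i) → (∀ i, X i) → ℝ :=
  fun x1 x2 =>
    (-1 : ℝ) ^ n *
      ∑ F : Finset (Fin n), ∑ G : Finset (Fin n),
        (-1 : ℝ) ^ (F.card + G.card) * I (comb F x1 x0) (comb G x2 x0)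

/-
The signed sum over `α ∈ {1,2}^n` is the mixed difference operator, i.e. the composition over all
coordinates of the one-coordinate differences `f (x²) - f (x¹)`, and it annihilates every function
that ignores some coordinate. Up to signs `K^𝕴` is the mixed difference of `𝕴` from `x_0⃗` in each of
its two arguments, and it differs from `𝕴` only by terms in which some coordinate of an argument is
frozen at `x_0⃗`; hence `K^𝕴` and `𝕴` have, up to sign, the same double mixed difference. In the one
of `𝕴`, the diagonal condition kills every pair `(α, β)` except `β = 3⃗ - α`, and `n`-symmetry makes
the `2^n` surviving terms equal.
-/

section Degree

variable {R : Type*} [Ring R]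

/-- The length `|α| = α_1 + ⋯ + α_n` of a multi-index `α ∈ {1,2}^n`, with `false` standing for `1`
and `true` for `2` as in `sel`. -/
def degree (α : ι → Bool) : ℕ :=
  ∑ i, if α i then 2 else 1

omit [DecidableEq ι] in
lemma degree_add_degree_not (α : ι → Bool) :
    degree α + degree (fun i => !α i) = 3 * Fintype.card ι := by
  have coordinate_sum (i : ι) :
      ((if α i then 2 else 1) + if !α i then 2 else 1) = 3 := by cases α i <;> rfl
  simp only [degree, ← sum_add_distrib, coordinate_sum, sum_const, card_univ, smul_eq_mul,
    mul_comm]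

omit [DecidableEq ι] in
lemma neg_one_pow_degree_mul_not (α : ι → Bool) :
    (-1 : R) ^ degree α * (-1) ^ degree (fun i => !α i) = (-1) ^ Fintype.card ι := by
  rw [← pow_add, degree_add_degree_not, pow_mul, Odd.neg_one_pow (by decide : Odd 3)]

lemma degree_update (α : ι → Bool) (i : ι) (b : Bool) :
    degree (Function.update α i b) =
      (if b then 2 else 1) + ∑ j ∈ univ \ {i}, if α j then 2 else 1 := by
  have values_update := Function.comp_update (fun c : Bool => if c then 2 else 1) α i b
  exact (congrArg (∑ j, · j) values_update).trans (sum_update_of_mem (mem_univ i) _ _)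

lemma neg_one_pow_degree_update_not (α : ι → Bool) (i : ι) :
    (-1 : R) ^ degree (Function.update α i (!α i)) = -(-1) ^ degree α := by
  conv_rhs => rw [← Function.update_eq_self i α]
  rw [degree_update, degree_update]
  cases α i <;> simp [pow_add]

lemma degree_decide_mem (F : Finset ι) :
    degree (fun i => decide (i ∈ F)) = Fintype.card ι + #F := by
  have value_eq (i : ι) :
      (if decide (i ∈ F) then 2 else 1) = 1 + if i ∈ F then 1 else 0 := by
    by_cases hi : i ∈ F <;> simp [hi]
  simp only [degree, value_eq, sum_add_distrib, sum_const, card_univ, smul_eq_mul, mul_one,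
    sum_boole, filter_univ_mem, Nat.cast_id]

end Degree

omit [Fintype ι] in
lemma comb_eq_sel (F : Finset ι) (a b : ∀ i, X i) :
    comb F b a = sel a b fun i => decide (i ∈ F) := by
  funext i
  simp [comb, sel]

section MixedDiff

variable {R : Type*} [CommRing R]

/-- The mixed difference of `f` from `a` to `b`: the one-coordinate differences
`f (x_i = b_i) - f (x_i = a_i)` composed over all coordinates `i`. -/
def mixedDiff (a b : ∀ i, X i) (f : (∀ i, X i) → R) : R :=
  ∑ α : ι → Bool, (-1) ^ degree α * f (sel a b α)

lemma mixedDiff_const_mul (a b : ∀ i, X i) (r : R) (f : (∀ i, X i) → R) :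
    mixedDiff a b (fun x => r * f x) = r * mixedDiff a b f := by
  simp only [mixedDiff, mul_sum, mul_left_comm]

lemma mixedDiff_comm {κ : Type*} [Fintype κ] [DecidableEq κ] {Y : κ → Type*} (a b : ∀ i, X i)
    (c d : ∀ k, Y k) (f : (∀ i, X i) → (∀ k, Y k) → R) :
    mixedDiff a b (fun x => mixedDiff c d (f x)) =
      mixedDiff c d fun y => mixedDiff a b fun x => f x y := by
  simp only [mixedDiff, mul_sum]
  rw [sum_comm]
  simp only [mul_left_comm]

lemma mixedDiff_eq_zero_of_dependsOn_compl_singleton {f : (∀ i, X i) → R} {i : ι}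
    (hf : DependsOn f {i}ᶜ) (a b : ∀ i, X i) : mixedDiff a b f = 0 := by
  have f_flip (α : ι → Bool) : f (sel a b (Function.update α i (!α i))) = f (sel a b α) :=
    hf fun j hj => by simp only [sel, Function.update_of_ne hj]
  refine sum_involution (fun α _ => Function.update α i (!α i)) ?_ ?_ (fun _ _ => mem_univ _) ?_
  · intro α _
    rw [f_flip, neg_one_pow_degree_update_not, neg_mul, add_neg_cancel]
  · intro α _ _ fixed
    simpa using congrFun fixed i
  · intro α _
    simp

/-- The function `x ↦ mixedDiff c x f` differs from `f` by functions that ignore some coordinate. -/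
lemma mixedDiff_mixedDiff_right (a b c : ∀ i, X i) (f : (∀ i, X i) → R) :
    mixedDiff a b (fun x => mixedDiff c x f) = mixedDiff a b f := by
  calc mixedDiff a b (fun x => mixedDiff c x f)
      = ∑ γ, (-1) ^ degree γ * mixedDiff a b fun x => f (sel c x γ) := by
        simp only [mixedDiff, mul_sum]
        rw [sum_comm]
        simp only [mul_left_comm]
    _ = (-1) ^ degree (fun _ : ι => true) * mixedDiff a b f := by
        refine Fintype.sum_eq_single _ fun γ hγ => ?_
        obtain ⟨i, hi⟩ := Function.ne_iff.mp hγ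
        have ignores_i : DependsOn (fun x => f (sel c x γ)) {i}ᶜ := fun x y hxy =>
          congrArg f <| funext fun j => by
            by_cases hj : j = i
            · simp_all [sel]
            · simp only [sel, hxy j hj]
        rw [mixedDiff_eq_zero_of_dependsOn_compl_singleton ignores_i, mul_zero]
    _ = mixedDiff a b f := by simp [degree, pow_mul']

lemma sum_neg_one_pow_card_mul_comb (a b : ∀ i, X i) (f : (∀ i, X i) → R) :
    ∑ F : Finset ι, (-1) ^ #F * f (comb F b a) = (-1) ^ Fintype.card ι * mixedDiff a b f := by
  rw [mixedDiff, mul_sum]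
  refine sum_nbij' (fun F i => decide (i ∈ F)) (fun α => univ.filter (α ·))
    (by simp) (by simp) (by simp) (by simp) fun F _ => ?_
  rw [degree_decide_mem, comb_eq_sel, ← mul_assoc, ← pow_add, ← add_assoc, pow_add _ (_ + _),
    Even.neg_one_pow ⟨_, rfl⟩, one_mul]

end MixedDiff

omit [DecidableEq ι] in
lemma ZeroAtDiag.eq_zero {I : (∀ i, X i) → (∀ i, X i) → ℝ} (hI : ZeroAtDiag (Fintype.card ι) I)
    {x y : ∀ i, X i} {i : ι} (hi : x i = y i) : I x y = 0 :=
  hI x y ⟨{i}, by simp, by simpa using hi⟩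

lemma mixedDiff_sel_left {I : (∀ i, X i) → (∀ i, X i) → ℝ} (hsymm : NSymm I)
    (hdiag : ZeroAtDiag (Fintype.card ι) I) (a b : ∀ i, X i) (α : ι → Bool) :
    mixedDiff a b (I (sel a b α)) = (-1) ^ degree (fun i => !α i) * I a b := by
  rw [← hsymm a b α]
  refine Fintype.sum_eq_single _ fun β hβ => ?_
  obtain ⟨i, hi⟩ := Function.ne_iff.mp hβ
  have agree_at_i : sel a b α i = sel a b β i := by simp_all [sel]
  rw [hdiag.eq_zero agree_at_i, mul_zero]

lemma mixedDiff_mixedDiff_of_nSymm_of_zeroAtDiag {I : (∀ i, X i) → (∀ i, X i) → ℝ}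
    (hsymm : NSymm I) (hdiag : ZeroAtDiag (Fintype.card ι) I) (a b : ∀ i, X i) :
    mixedDiff a b (fun x => mixedDiff a b (I x)) = (-2) ^ Fintype.card ι * I a b := by
  calc mixedDiff a b (fun x => mixedDiff a b (I x))
      = ∑ _α : ι → Bool, (-1) ^ Fintype.card ι * I a b := by
        rw [mixedDiff]
        simp only [mixedDiff_sel_left hsymm hdiag, ← mul_assoc, neg_one_pow_degree_mul_not]
    _ = (-2) ^ Fintype.card ι * I a b := by
        simp [← mul_assoc, ← mul_pow]

section Kernel

variable {n : ℕ} {X : Fin n → Type*} (I : (∀ i, X i) → (∀ i, X i) → ℝ) (x0 : ∀ i, X i)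

lemma stmt4K_eq_mixedDiff (x y : ∀ i, X i) :
    stmt4K I x0 x y = (-1) ^ n * mixedDiff x0 x fun u => mixedDiff x0 y (I u) := by
  have sum_over_G (F : Finset (Fin n)) := sum_neg_one_pow_card_mul_comb x0 y (I (comb F x x0))
  have sum_over_F := sum_neg_one_pow_card_mul_comb x0 x fun u => mixedDiff x0 y (I u)
  simp only [Fintype.card_fin] at sum_over_G sum_over_F
  simp only [stmt4K, pow_add, mul_assoc, ← mul_sum, sum_over_G]
  simp only [mul_left_comm _ ((-1 : ℝ) ^ n), ← mul_sum, sum_over_F]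
  simp [← mul_assoc, ← mul_pow]

lemma mixedDiff_mixedDiff_stmt4K (a b c d : ∀ i, X i) :
    mixedDiff a b (fun x => mixedDiff c d (stmt4K I x0 x)) =
      (-1) ^ n * mixedDiff a b fun x => mixedDiff c d (I x) := by
  have second_argument (x : ∀ i, X i) : mixedDiff c d (stmt4K I x0 x) =
      (-1) ^ n * mixedDiff x0 x fun u => mixedDiff c d (I u) := by
    calc mixedDiff c d (stmt4K I x0 x)
        = (-1) ^ n * mixedDiff c d fun y => mixedDiff x0 x fun u => mixedDiff x0 y (I u) := by
          rw [← mixedDiff_const_mul]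
          exact congrArg _ (funext (stmt4K_eq_mixedDiff I x0 x))
      _ = (-1) ^ n * mixedDiff x0 x fun u => mixedDiff c d fun y => mixedDiff x0 y (I u) := by
          rw [mixedDiff_comm]
      _ = (-1) ^ n * mixedDiff x0 x fun u => mixedDiff c d (I u) := by
          simp only [mixedDiff_mixedDiff_right]
  simp only [second_argument, mixedDiff_const_mul, mixedDiff_mixedDiff_right]

end Kernel

theorem statement4 {n : ℕ} (X : Fin n → Type*)
    (I : (∀ i, X i) → (∀ i, X i) → ℝ) (hsym : NSymm I) (hz : ZeroAtDiag n I)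
    (x0 : ∀ i, X i) :
    ∀ x1 x2 : ∀ i, X i,
      (∑ α : Fin n → Bool, ∑ β : Fin n → Bool,
        (-1 : ℝ) ^ ((∑ i, if α i then 2 else 1 : ℕ) + (∑ i, if β i then 2 else 1 : ℕ)) *
          stmt4K I x0 (sel x1 x2 α) (sel x1 x2 β)) = 2 ^ n * I x1 x2 := by
  intro x1 x2
  calc _ = mixedDiff x1 x2 fun x => mixedDiff x1 x2 (stmt4K I x0 x) := by
        simp only [mixedDiff, degree, pow_add, mul_sum, mul_assoc]
    _ = (-1) ^ n * mixedDiff x1 x2 fun x => mixedDiff x1 x2 (I x) :=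
        mixedDiff_mixedDiff_stmt4K I x0 x1 x2 x1 x2
    _ = (-1) ^ n * ((-2) ^ n * I x1 x2) := by
        rw [mixedDiff_mixedDiff_of_nSymm_of_zeroAtDiag hsym (by simpa using hz), Fintype.card_fin]
    _ = 2 ^ n * I x1 x2 := by rw [← mul_assoc, ← mul_pow]; norm_num

end PDIPaper
end
end

section
/- Let n ≥ 2, let 𝕴 : 𝕏_n × 𝕏_n → [0,∞) be a PDI_n kernel that is zero at the extended diagonal Δ_{n−1}^n, and let f : [0,∞) → ℝ. If the kernel (x,y) ↦ f(𝕴(x,y)) is positive definite on 𝕏_n, then it is constant: f(𝕴(x,y)) = f(0) for all x, y ∈ 𝕏_n. -/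
noncomputable section

open Finset

namespace PDIPaper

variable {ι : Type*} [Fintype ι] [DecidableEq ι] {X : ι → Type*}

/-!
Let `φ` be the feature map of the positive definite kernel `K = f ∘ I`. If `u` and `v` differ in one
coordinate only, then `I u u = I v v = I u v = 0`, because such points agree in
`n - 1 ≥ n - k + 1` coordinates. Hence `‖φ u - φ v‖² = K u u + K v v - 2 * K u v = 0`. Changing the
coordinates of `x` one at a time to those of `y` gives `φ x = φ y`, so
`f (I x y) = f (I y y) = f 0`.
-/

section

variable {κ : Type*} {Y : κ → Type*} {I : (∀ i, Y i) → (∀ i, Y i) → ℝ}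

theorem NSymm.symm (hI : NSymm I) (x y : ∀ i, Y i) : I x y = I y x :=
  (hI x y fun _ => true).symm

theorem ZeroAtDiag.eq_zero_of_forall_ne_eq [Fintype κ] {k : ℕ} (hI : ZeroAtDiag k I)
    (hk : 2 ≤ k) (hkκ : k ≤ Fintype.card κ) {x y : ∀ i, Y i} {i : κ}
    (hxy : ∀ j ≠ i, x j = y j) : I x y = 0 := by
  classical
  have hcard : Fintype.card κ - k + 1 ≤ (univ.erase i).card := by
    rw [card_erase_of_mem (mem_univ i), card_univ]
    omega
  obtain ⟨s, hs, hs_card⟩ := exists_subset_card_eq hcard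
  exact hI x y ⟨s, hs_card, fun j hj => hxy j (ne_of_mem_erase (hs hj))⟩

theorem eq_of_forall_update_eq [Finite κ] [DecidableEq κ] {β : Type*} {g : (∀ i, Y i) → β}
    (hg : ∀ x i (a : Y i), g (Function.update x i a) = g x) (x y : ∀ i, Y i) : g x = g y := by
  have := Fintype.ofFinite κ
  have hpiecewise (s : Finset κ) : g (s.piecewise x y) = g y := by
    induction s using Finset.induction_on with
    | empty => rw [piecewise_empty]
    | insert i s _ ih => rw [piecewise_insert, hg, ih]
  simpa only [piecewise_univ] using hpiecewise univ

theorem IsPD.eq_of_add_eq_two_mul {Z : Type*} {K : Z → Z → ℝ} (hK : IsPD K)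
    (hsymm : ∀ x y, K x y = K y x) {x y : Z} (hxy : K x x + K y y = 2 * K x y) : K x = K y := by
  funext z
  -- An affine function of `t` that is nonnegative on all of `ℝ` has slope zero.
  have hquad (t : ℝ) : 0 ≤ 0 * (t * t) + 2 * (K x z - K y z) * t + K z z := by
    have hform := hK 3 ![x, y, z] ![t, -t, 1]
    simp only [Fin.sum_univ_three, Matrix.cons_val] at hform
    rw [hsymm y x, hsymm z x, hsymm z y] at hform
    linear_combination hform + t ^ 2 * hxy
  have hslope : (K x z - K y z) ^ 2 ≤ 0 := by
    have hdiscrim := discrim_le_zero hquad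
    rw [discrim] at hdiscrim
    linarith
  exact sub_eq_zero.mp ((sq_nonpos_iff _).mp hslope)

theorem statement6_general [Fintype κ] {k : ℕ} (hk : 2 ≤ k) (hkκ : k ≤ Fintype.card κ)
    (hsymm : ∀ x y, I x y = I y x) (hI : ZeroAtDiag k I)
    {f : ℝ → ℝ} (hf : IsPD fun x y : ∀ i, Y i => f (I x y)) (x y : ∀ i, Y i) :
    f (I x y) = f 0 := by
  classical
  obtain ⟨i₀⟩ : Nonempty κ := Fintype.card_pos_iff.mp (by omega)
  have hself (u : ∀ i, Y i) : I u u = 0 :=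
    hI.eq_zero_of_forall_ne_eq hk hkκ (i := i₀) fun _ _ => rfl
  have hupdate (u : ∀ i, Y i) (i : κ) (a : Y i) : I (Function.update u i a) u = 0 :=
    hI.eq_zero_of_forall_ne_eq hk hkκ fun _ hj => Function.update_of_ne hj a u
  have hrow_update (u : ∀ i, Y i) (i : κ) (a : Y i) :
      (fun z => f (I (Function.update u i a) z)) = fun z => f (I u z) :=
    hf.eq_of_add_eq_two_mul (fun v w => congrArg f (hsymm v w))
      (by simp only [hself, hupdate, two_mul])
  have hrow : (fun z => f (I x z)) = fun z => f (I y z) :=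
    eq_of_forall_update_eq (g := fun u z => f (I u z)) hrow_update x y
  calc f (I x y) = f (I y y) := congrFun hrow y
    _ = f 0 := by rw [hself]

end

theorem statement6 {n : ℕ} (hn : 2 ≤ n) (X : Fin n → Type*)
    (I : (∀ i, X i) → (∀ i, X i) → ℝ) (hpos : ∀ x1 x2 : ∀ i, X i, 0 ≤ I x1 x2)
    (hI : IsPDI n I) (hz : ZeroAtDiag n I)
    (f : ℝ → ℝ) (hf : IsPD fun x1 x2 : ∀ i, X i => f (I x1 x2)) :
    ∀ x1 x2 : ∀ i, X i, f (I x1 x2) = f 0 := by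
  exact statement6_general hn (Fintype.card_fin n).ge hI.1.symm hz hf

end PDIPaper
end
end
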